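/- Let m ≥ 1, let l > 2 be an even integer, let 0 ≤ s ≤ 2m-1, and set d = (2^{2lm}-1)/(2^m+1) + 2^s; assume gcd(d, 2^{2lm}-1) = 1. Let σ be the multiplicative inverse of 2^s modulo 2^{2lm}-1. Then for every z in GF(2^{2lm}) of the form z = x₀^{dσ-1} for some nonzero x₀ in GF(2^{2lm}), one has S_d(z) ≥ 2^{(l+2)m}·(2^{(l-2)m}-1)/(2^m+1), and in particular S_d(z) > 2^{lm+1}. -/

import Mathlib

noncomputable instance (p n : ℕ) [Fact p.Prime] : Fintype (GaloisField p n) :=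
  Fintype.ofFinite _

/-- The Weil sum `S_d(z) = ∑_{x ∈ GF(2^n)} (-1)^{Tr(zx + x^d)}`, where `Tr` is
the absolute trace from `GF(2^n)` to `GF(2)`. -/
noncomputable def binaryWeilSum (n d : ℕ) (z : GaloisField 2 n) : ℤ :=
  ∑ x : GaloisField 2 n,
    (-1 : ℤ) ^ (Algebra.trace (ZMod 2) (GaloisField 2 n) (z * x + x ^ d)).val

/-!
Since `Tr` is Frobenius-invariant, `Tr(x^d) = Tr(x^(k+1))` for `k = dσ - 1`, so `S_d(x₀^k)` is the
sum over `x` of `(-1)^Tr(x(x₀^k + x^k))`. Write `q = 2^m`. The map `x ↦ x^k` is invariant under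
multiplication of `x` by nonzero `(q+1)`-st powers, so averaging over these expresses the Weil sum
through the Gold sums `T(b) = ∑_y (-1)^Tr(b y^(q+1))` at `b = x(x₀^k + x^k)`. Squaring gives
`T(b)² ≤ q²|F|` for `b ≠ 0`, while `T(0) = |F|` is attained at `x = 0` and whenever `x / x₀` is a
root of unity of order dividing `e = (|F| - 1)/(q + 1)`; these `e + 1` terms dominate the sum.
-/

section TraceCharacter

variable (F : Type*) [Field F] [Algebra (ZMod 2) F]

theorem charP_two_of_algebra_zmod : CharP F 2 :=
  (Algebra.charP_iff (ZMod 2) F 2).mp inferInstance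

/-- The canonical additive character `x ↦ (-1)^Tr(x)` of a field of characteristic 2, with values
in `ℤ`. -/
noncomputable def traceChar : AddChar F ℤ :=
  (AddChar.zmodChar 2 (neg_one_sq : (-1 : ℤ) ^ 2 = 1)).compAddMonoidHom
    (Algebra.trace (ZMod 2) F).toAddMonoidHom

variable {F}

theorem traceChar_apply (x : F) :
    traceChar F x = (-1) ^ (Algebra.trace (ZMod 2) F x).val := rfl

theorem traceChar_le_one (x : F) : traceChar F x ≤ 1 := by
  rw [traceChar_apply]
  rcases neg_one_pow_eq_or ℤ (Algebra.trace (ZMod 2) F x).val with h | h <;> simp [h]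

variable [Finite F]

theorem traceChar_pow_two_pow (x : F) (k : ℕ) : traceChar F (x ^ 2 ^ k) = traceChar F x := by
  have trace_frobenius := Algebra.trace_eq_of_algEquiv
    (FiniteField.frobeniusAlgEquivOfAlgebraic (ZMod 2) F ^ k) x
  rw [AlgEquiv.coe_pow, FiniteField.coe_frobeniusAlgEquivOfAlgebraic_iterate,
    ZMod.card] at trace_frobenius
  rw [traceChar_apply, trace_frobenius, traceChar_apply]

theorem traceChar_isPrimitive : (traceChar F).IsPrimitive := by
  refine AddChar.IsPrimitive.of_ne_one fun traceChar_eq_one ↦ ?_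
  obtain ⟨x, hx⟩ := Algebra.trace_surjective (ZMod 2) F 1
  have h := DFunLike.congr_fun traceChar_eq_one x
  rw [traceChar_apply, hx] at h
  simp [ZMod.val_one] at h

theorem traceChar_mul_traceChar_add (m : ℕ) (b y w : F) :
    traceChar F (b * y ^ (2 ^ m + 1)) * traceChar F (b * (w + y) ^ (2 ^ m + 1)) =
      traceChar F (b * w ^ (2 ^ m + 1)) *
        traceChar F ((b ^ 2 ^ m * w ^ 2 ^ (2 * m) + b * w) * y ^ 2 ^ m) := by
  have := charP_two_of_algebra_zmod F
  have frobenius_cross_term :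
      traceChar F (b ^ 2 ^ m * w ^ 2 ^ (2 * m) * y ^ 2 ^ m) =
        traceChar F (b * w ^ 2 ^ m * y) := by
    rw [← traceChar_pow_two_pow (b * w ^ 2 ^ m * y) m, mul_pow, mul_pow, ← pow_mul, ← pow_add,
      two_mul]
  rw [add_mul, AddChar.map_add_eq_mul, frobenius_cross_term]
  simp only [← AddChar.map_add_eq_mul]
  congr 1
  rw [pow_succ (w + y), add_pow_char_pow]
  linear_combination b * y ^ (2 ^ m + 1) * (CharTwo.two_eq_zero : (2 : F) = 0)

end TraceCharacter

section GoldSum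

open scoped Finset

variable {F : Type*} [Field F] [Fintype F] [Algebra (ZMod 2) F]

theorem sum_traceChar_mul_pow_two_pow [DecidableEq F] (c : F) (k : ℕ) :
    ∑ y, traceChar F (c * y ^ 2 ^ k) = if c = 0 then (Fintype.card F : ℤ) else 0 := by
  have := charP_two_of_algebra_zmod F
  have sum_frobenius := (iterateFrobeniusEquiv F 2 k).toEquiv.sum_comp
    fun y ↦ traceChar F (c * y)
  simp only [mul_comm c] at sum_frobenius ⊢
  exact sum_frobenius.trans <| by
    simpa using AddChar.sum_mulShift c traceChar_isPrimitive

/-- The Gold sum `∑_y (-1)^Tr(b y^(2^m + 1))`, the exponential sum of the quadratic form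
`y ↦ Tr(b y^(2^m + 1))`. -/
noncomputable def goldSum (m : ℕ) (b : F) : ℤ :=
  ∑ y, traceChar F (b * y ^ (2 ^ m + 1))

theorem goldSum_zero (m : ℕ) : goldSum m (0 : F) = Fintype.card F := by
  simp [goldSum]

theorem goldSum_sq [DecidableEq F] (m : ℕ) (b : F) :
    goldSum m b ^ 2 =
      ∑ w with b ^ 2 ^ m * w ^ 2 ^ (2 * m) + b * w = 0,
        traceChar F (b * w ^ (2 ^ m + 1)) * Fintype.card F := by
  calc goldSum m b ^ 2
      = ∑ y, ∑ w, traceChar F (b * y ^ (2 ^ m + 1)) * traceChar F (b * w ^ (2 ^ m + 1)) := by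
        rw [sq, goldSum, Finset.sum_mul_sum]
    _ = ∑ y, ∑ w,
          traceChar F (b * y ^ (2 ^ m + 1)) * traceChar F (b * (w + y) ^ (2 ^ m + 1)) :=
        Finset.sum_congr rfl fun y _ ↦ (Equiv.sum_comp (Equiv.addRight y) fun w ↦
          traceChar F (b * y ^ (2 ^ m + 1)) * traceChar F (b * w ^ (2 ^ m + 1))).symm
    _ = ∑ w, traceChar F (b * w ^ (2 ^ m + 1)) *
          ∑ y, traceChar F ((b ^ 2 ^ m * w ^ 2 ^ (2 * m) + b * w) * y ^ 2 ^ m) := by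
        rw [Finset.sum_comm]
        simp only [traceChar_mul_traceChar_add, Finset.mul_sum]
    _ = _ := by
        simp only [sum_traceChar_mul_pow_two_pow, mul_ite, mul_zero, Finset.sum_filter]

theorem card_le_of_forall_mul_pow_add_mul_eq_zero {R : Type*} [CommRing R] [IsDomain R] {a b : R}
    (hb : b ≠ 0) {n : ℕ} (hn : 1 < n) {Z : Finset R} (hZ : ∀ w ∈ Z, a * w ^ n + b * w = 0) :
    #Z ≤ n := by
  let P : Polynomial R := .C a * .X ^ n + .C b * .X
  have hP : P ≠ 0 := fun h ↦ hb <| by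
    simpa [P, Polynomial.coeff_X_pow, hn.ne] using congrArg (Polynomial.coeff · 1) h
  have natDegree_le : P.natDegree ≤ n := by
    simp only [P]
    compute_degree
    exact max_le le_rfl hn.le
  refine (Polynomial.card_le_degree_of_subset_roots fun w hw ↦ ?_).trans natDegree_le
  rw [Polynomial.mem_roots hP]
  simpa [P] using hZ w hw

theorem goldSum_sq_le {m : ℕ} (hm : m ≠ 0) {b : F} (hb : b ≠ 0) :
    goldSum m b ^ 2 ≤ 2 ^ (2 * m) * Fintype.card F := by
  classical
  calc goldSum m b ^ 2
      ≤ ∑ w : F with b ^ 2 ^ m * w ^ 2 ^ (2 * m) + b * w = 0, (Fintype.card F : ℤ) := by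
        rw [goldSum_sq]
        exact Finset.sum_le_sum fun w _ ↦
          mul_le_of_le_one_left (Int.natCast_nonneg _) (traceChar_le_one _)
    _ = #{w : F | b ^ 2 ^ m * w ^ 2 ^ (2 * m) + b * w = 0} * Fintype.card F := by
        rw [Finset.sum_const, nsmul_eq_mul]
    _ ≤ 2 ^ (2 * m) * Fintype.card F := by
        gcongr
        exact_mod_cast card_le_of_forall_mul_pow_add_mul_eq_zero hb
          (Nat.one_lt_two_pow (mul_ne_zero two_ne_zero hm)) fun w hw ↦ (Finset.mem_filter.mp hw).2

theorem neg_le_goldSum {m Q : ℕ} (hm : m ≠ 0) (hQ : Fintype.card F = Q ^ 2) {b : F}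
    (hb : b ≠ 0) : -(2 ^ m * Q : ℤ) ≤ goldSum m b := by
  refine (abs_le_of_sq_le_sq' ?_ (by positivity)).1
  refine (goldSum_sq_le hm hb).trans_eq ?_
  rw [hQ]
  push_cast
  ring

end GoldSum

section RootsOfUnity

open scoped Finset

variable {F : Type*} [Field F] [Fintype F]

theorem card_nthRootsFinset_of_dvd_card_sub_one {e : ℕ} (he : e ∣ Fintype.card F - 1) :
    #(Polynomial.nthRootsFinset e (1 : F)) = e := by
  classical
  obtain ⟨f, hef⟩ := he
  obtain ⟨g, orderOf_g⟩ := IsCyclic.exists_ofOrder_eq_natCard (α := Fˣ)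
  rw [Nat.card_eq_fintype_card, Fintype.card_units] at orderOf_g
  have hpos : 0 < Fintype.card F - 1 := Nat.sub_pos_of_lt Fintype.one_lt_card
  have primitive_g : IsPrimitiveRoot (g : F) (Fintype.card F - 1) :=
    IsPrimitiveRoot.coe_units_iff.mpr (orderOf_g ▸ IsPrimitiveRoot.orderOf g)
  exact (primitive_g.pow hpos (hef.trans (mul_comm e f))).card_nthRootsFinset

theorem succ_le_card_filter_mul_pow_add_pow_eq_zero [DecidableEq F] [CharP F 2] {e k : ℕ}
    (he : e ∣ Fintype.card F - 1) (hek : e ∣ k) {x₀ : F} (hx₀ : x₀ ≠ 0) :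
    e + 1 ≤ #{x : F | x * (x₀ ^ k + x ^ k) = 0} := by
  have he0 : 0 < e := Nat.pos_of_dvd_of_pos he (Nat.sub_pos_of_lt Fintype.one_lt_card)
  let coset := (Polynomial.nthRootsFinset e (1 : F)).map (Equiv.mulLeft₀ x₀ hx₀).toEmbedding
  have zero_notMem : (0 : F) ∉ coset := by
    simp [coset, Polynomial.mem_nthRootsFinset he0, he0.ne']
  have card_insert : #(insert 0 coset) = e + 1 := by
    rw [Finset.card_insert_of_notMem zero_notMem, Finset.card_map,
      card_nthRootsFinset_of_dvd_card_sub_one he]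
  rw [← card_insert]
  refine Finset.card_le_card (Finset.insert_subset (by simp) fun x hx ↦ ?_)
  obtain ⟨ζ, hζ, rfl⟩ := Finset.mem_map.mp hx
  have hζk : ζ ^ k = 1 := by
    obtain ⟨f, rfl⟩ := hek
    rw [pow_mul, (Polynomial.mem_nthRootsFinset he0 1).mp hζ, one_pow]
  simp [mul_pow, hζk, CharTwo.add_self_eq_zero]

end RootsOfUnity

section WeilSum

open scoped Finset

variable {F : Type*} [Field F] [Fintype F] [Algebra (ZMod 2) F]

/-- The Weil sum `∑_x (-1)^Tr(z x + x^d)` over an arbitrary finite field of characteristic 2;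
`binaryWeilSum` is the case of `GaloisField 2 n`. -/
noncomputable def weilSum (d : ℕ) (z : F) : ℤ :=
  ∑ x, traceChar F (z * x + x ^ d)

theorem weilSum_eq_sum_traceChar_mul {d k s : ℕ} (hd : d ≠ 0)
    (hdk : d ≡ 2 ^ s * (k + 1) [MOD Fintype.card F - 1]) (z : F) :
    weilSum d z = ∑ x, traceChar F (x * (z + x ^ k)) := by
  have pow_d_eq (x : F) : x ^ d = (x * x ^ k) ^ 2 ^ s := by
    rw [← pow_succ', ← pow_mul']
    rcases eq_or_ne x 0 with rfl | hx
    · simp [hd]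
    · exact pow_eq_pow_of_modEq hdk (FiniteField.pow_card_sub_one_eq_one x hx)
  refine Finset.sum_congr rfl fun x _ ↦ ?_
  rw [mul_add, mul_comm z, AddChar.map_add_eq_mul, AddChar.map_add_eq_mul, pow_d_eq,
    traceChar_pow_two_pow]

theorem sum_traceChar_mul_pow_eq {k r : ℕ} (hk : Fintype.card F - 1 ∣ k * r) (z : F) {y : F}
    (hy : y ≠ 0) :
    ∑ x, traceChar F (x * (z + x ^ k) * y ^ r) = ∑ x, traceChar F (x * (z + x ^ k)) := by
  have y_pow_eq_one : (y ^ r) ^ k = 1 := by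
    obtain ⟨t, ht⟩ := hk
    rw [← pow_mul', ht, pow_mul, FiniteField.pow_card_sub_one_eq_one y hy, one_pow]
  rw [← Equiv.sum_comp (Equiv.mulRight₀ (y ^ r) (pow_ne_zero r hy))
    fun x ↦ traceChar F (x * (z + x ^ k))]
  refine Finset.sum_congr rfl fun x _ ↦ ?_
  rw [Equiv.mulRight₀_apply, mul_pow, y_pow_eq_one, mul_one, mul_right_comm]

theorem sum_goldSum_mul_add_pow {k m : ℕ} (hk : Fintype.card F - 1 ∣ k * (2 ^ m + 1)) (z : F) :
    ∑ x, goldSum m (x * (z + x ^ k)) =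
      Fintype.card F + (Fintype.card F - 1) * ∑ x, traceChar F (x * (z + x ^ k)) := by
  classical
  simp only [goldSum]
  rw [Finset.sum_comm, ← Finset.add_sum_erase _ _ (Finset.mem_univ (0 : F))]
  congr 1
  · simp
  · rw [Finset.sum_congr rfl fun y hy ↦
        sum_traceChar_mul_pow_eq hk z (Finset.ne_of_mem_erase hy),
      Finset.sum_const, Finset.card_erase_of_mem (Finset.mem_univ _), Finset.card_univ,
      nsmul_eq_mul, Nat.cast_pred Fintype.card_pos]

theorem sum_goldSum_ge [DecidableEq F] {m Q : ℕ} (hm : m ≠ 0) (hQ : Fintype.card F = Q ^ 2)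
    (g : F → F) :
    #{x | g x = 0} * (Q ^ 2 + 2 ^ m * Q : ℤ) - Q ^ 2 * (2 ^ m * Q) ≤ ∑ x, goldSum m (g x) := by
  calc #{x | g x = 0} * (Q ^ 2 + 2 ^ m * Q : ℤ) - Q ^ 2 * (2 ^ m * Q)
      = ∑ x, ((if g x = 0 then (Q ^ 2 + 2 ^ m * Q : ℤ) else 0) - 2 ^ m * Q) := by
        simp [Finset.sum_sub_distrib, ← Finset.sum_filter, hQ]
    _ ≤ ∑ x, goldSum m (g x) := Finset.sum_le_sum fun x _ ↦ by
        split_ifs with hx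
        · simp [hx, goldSum_zero, hQ]
        · simpa using neg_le_goldSum hm hQ hx

theorem le_mul_sum_traceChar_mul {m Q e k : ℕ} (hm : m ≠ 0) (hQ : Fintype.card F = Q ^ 2)
    (he : e * (2 ^ m + 1) = Fintype.card F - 1) (hek : e ∣ k) {x₀ : F} (hx₀ : x₀ ≠ 0) :
    (Q ^ 2 - (2 ^ m) ^ 2 * Q : ℤ) ≤
      (2 ^ m + 1) * ∑ x, traceChar F (x * (x₀ ^ k + x ^ k)) := by
  classical
  have := charP_two_of_algebra_zmod F
  have he_cast : (e * (2 ^ m + 1) : ℤ) = Q ^ 2 - 1 := by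
    have h := congrArg (Nat.cast (R := ℤ)) he
    rw [Nat.cast_pred Fintype.card_pos, hQ] at h
    exact_mod_cast h
  have he_pos : (0 : ℤ) < e := by
    have hpos : 0 < e * (2 ^ m + 1) := he ▸ Nat.sub_pos_of_lt Fintype.one_lt_card
    exact_mod_cast Nat.pos_of_mul_pos_right hpos
  have zeros : (e + 1 : ℤ) ≤ #{x : F | x * (x₀ ^ k + x ^ k) = 0} := by
    exact_mod_cast succ_le_card_filter_mul_pow_add_pow_eq_zero (Dvd.intro _ he) hek hx₀
  have lower := sum_goldSum_ge hm hQ fun x : F ↦ x * (x₀ ^ k + x ^ k)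
  rw [sum_goldSum_mul_add_pow (he ▸ Nat.mul_dvd_mul_right hek _), hQ] at lower
  push_cast at lower
  rw [← he_cast] at lower
  generalize ∑ x, traceChar F (x * (x₀ ^ k + x ^ k)) = S at lower ⊢
  refine le_of_mul_le_mul_left ?_ he_pos
  calc (e : ℤ) * (Q ^ 2 - (2 ^ m) ^ 2 * Q)
      = (e + 1) * (Q ^ 2 + 2 ^ m * Q) - Q ^ 2 * (2 ^ m * Q) - Q ^ 2 := by
        linear_combination -(2 ^ m * Q : ℤ) * he_cast
    _ ≤ e * ((2 ^ m + 1) * S) := by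
        linarith [mul_le_mul_of_nonneg_right zeros (by positivity : (0 : ℤ) ≤ Q ^ 2 + 2 ^ m * Q)]

theorem le_mul_weilSum {m Q e s d σ : ℕ} (hm : m ≠ 0) (hQ : Fintype.card F = Q ^ 2)
    (he : e * (2 ^ m + 1) = Fintype.card F - 1) (hd : d = e + 2 ^ s)
    (hσ : 2 ^ s * σ ≡ 1 [MOD Fintype.card F - 1]) {x₀ : F} (hx₀ : x₀ ≠ 0) :
    (Q ^ 2 - (2 ^ m) ^ 2 * Q : ℤ) ≤ (2 ^ m + 1) * weilSum d (x₀ ^ (d * σ - 1)) := by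
  have hd0 : d ≠ 0 := hd ▸ (Nat.add_pos_right e (Nat.two_pow_pos s)).ne'
  have hσ0 : σ ≠ 0 := by
    rintro rfl
    have card_dvd_one : Fintype.card F - 1 ∣ 1 := Nat.modEq_zero_iff_dvd.mp hσ.symm
    simpa using (Dvd.intro_left e he).trans card_dvd_one
  have hdσ : 1 ≤ d * σ := Nat.one_le_iff_ne_zero.mpr (mul_ne_zero hd0 hσ0)
  have e_dvd : e ∣ d * σ - 1 := by
    refine (Nat.modEq_iff_dvd' hdσ).mp (Nat.ModEq.symm ?_)
    calc d * σ = σ * e + 2 ^ s * σ := by rw [hd]; ring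
      _ ≡ 2 ^ s * σ [MOD e] := by simp [Nat.ModEq]
      _ ≡ 1 [MOD e] := hσ.of_dvd (Dvd.intro _ he)
  have hdk : d ≡ 2 ^ s * (d * σ - 1 + 1) [MOD Fintype.card F - 1] := by
    rw [Nat.sub_add_cancel hdσ]
    simpa [mul_left_comm] using (hσ.mul_left d).symm
  rw [weilSum_eq_sum_traceChar_mul hd0 hdk]
  exact le_mul_sum_traceChar_mul hm hQ he e_dvd hx₀

end WeilSum

theorem succ_dvd_pow_two_mul_sub_one (a n : ℕ) : a + 1 ∣ a ^ (2 * n) - 1 := by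
  have sq_sub_one_dvd : a ^ 2 - 1 ∣ a ^ (2 * n) - 1 := by
    simpa [pow_mul] using Nat.sub_dvd_pow_sub_pow (a ^ 2) 1 n
  exact (Dvd.intro _ (Nat.sq_sub_sq a 1).symm).trans (by simpa using sq_sub_one_dvd)

theorem two_pow_sq_add_lt_pow {m l : ℕ} (hl : 2 < l) (hlm : 3 < l * m) :
    (2 ^ m) ^ 2 + 2 * (2 ^ m + 1) < (2 ^ m) ^ l := by
  have hm : m ≠ 0 := by rintro rfl; simp at hlm
  have two_le : 2 ≤ 2 ^ m := Nat.le_self_pow hm 2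
  rcases (Nat.succ_le_of_lt hl).eq_or_lt with rfl | hl
  · have four_le : 2 ^ 2 ≤ 2 ^ m := Nat.pow_le_pow_right two_pos (by omega)
    generalize 2 ^ m = q at *
    nlinarith
  · refine lt_of_lt_of_le ?_ (Nat.pow_le_pow_right (by positivity) hl)
    generalize 2 ^ m = q at *
    nlinarith [Nat.mul_le_mul two_le two_le, Nat.zero_le (q ^ 3)]

theorem weil_sum_lower_bound_l_gt_two_general {F : Type*} [Field F] [Fintype F]
    [Algebra (ZMod 2) F] (m l s d σ : ℕ) (hF : Fintype.card F = 2 ^ (2 * l * m)) (hl : 2 ≤ l)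
    (hd : d = (2 ^ (2 * l * m) - 1) / (2 ^ m + 1) + 2 ^ s)
    (hσ : 2 ^ s * σ ≡ 1 [MOD 2 ^ (2 * l * m) - 1]) {x₀ : F} (hx₀ : x₀ ≠ 0) :
    ((2 ^ ((l + 2) * m) * (2 ^ ((l - 2) * m) - 1) / (2 ^ m + 1) : ℚ)
        ≤ (weilSum d (x₀ ^ (d * σ - 1)) : ℚ)) ∧
      (2 < l → 3 < l * m → (2 ^ (l * m + 1) : ℤ) < weilSum d (x₀ ^ (d * σ - 1))) := by
  have hm : m ≠ 0 := by
    rintro rfl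
    simpa [hF] using Fintype.one_lt_card (α := F)
  have hQ : Fintype.card F = ((2 ^ m) ^ l) ^ 2 := by rw [hF]; ring
  have hdvd : 2 ^ m + 1 ∣ 2 ^ (2 * l * m) - 1 := by
    simpa only [← pow_mul'] using succ_dvd_pow_two_mul_sub_one (2 ^ m) l
  have bound := le_mul_weilSum hm hQ (hF.symm ▸ Nat.div_mul_cancel hdvd) hd (hF.symm ▸ hσ) hx₀
  push_cast at bound
  generalize weilSum d (x₀ ^ (d * σ - 1)) = S at bound ⊢
  refine ⟨?_, fun hl hlm ↦ ?_⟩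
  · obtain ⟨k, rfl⟩ := Nat.exists_eq_add_of_le' hl
    rw [div_le_iff₀' (by positivity), Nat.add_sub_cancel]
    have bound_rat : (((2 ^ m) ^ (k + 2)) ^ 2 - (2 ^ m) ^ 2 * (2 ^ m) ^ (k + 2) : ℚ) ≤
        (2 ^ m + 1) * S := by
      exact_mod_cast (Int.cast_le (R := ℚ)).mpr bound
    refine le_trans (le_of_eq ?_) bound_rat
    ring
  · have gap : ((2 ^ m) ^ 2 + 2 * (2 ^ m + 1) : ℤ) < (2 ^ m) ^ l := by
      exact_mod_cast two_pow_sq_add_lt_pow hl hlm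
    refine lt_of_mul_lt_mul_left (lt_of_lt_of_le ?_ bound) (by positivity : (0 : ℤ) ≤ 2 ^ m + 1)
    calc ((2 ^ m + 1) * 2 ^ (l * m + 1) : ℤ) = (2 ^ m) ^ l * (2 * (2 ^ m + 1)) := by ring
      _ < (2 ^ m) ^ l * ((2 ^ m) ^ l - (2 ^ m) ^ 2) := by gcongr; linarith
      _ = ((2 ^ m) ^ l) ^ 2 - (2 ^ m) ^ 2 * (2 ^ m) ^ l := by ring

/-- For `l > 2` even, `d = (2^(2lm)-1)/(2^m+1) + 2^s` coprime to `2^(2lm)-1`,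
and `σ` the inverse of `2^s` modulo `2^(2lm)-1`: every `z = x₀^(dσ-1)` with
`x₀ ≠ 0` satisfies `S_d(z) ≥ 2^((l+2)m)(2^((l-2)m)-1)/(2^m+1)`, and in
particular `S_d(z) > 2^(lm+1)`. -/
theorem weil_sum_lower_bound_l_gt_two (m l s d σ : ℕ) (hm : 1 ≤ m) (hl : 2 < l)
    (hle : Even l) (hs : s ≤ 2 * m - 1)
    (hd : d = (2 ^ (2 * l * m) - 1) / (2 ^ m + 1) + 2 ^ s)
    (hgcd : Nat.gcd d (2 ^ (2 * l * m) - 1) = 1)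
    (hσ : 2 ^ s * σ ≡ 1 [MOD 2 ^ (2 * l * m) - 1]) :
    ∀ z x₀ : GaloisField 2 (2 * l * m), x₀ ≠ 0 → z = x₀ ^ (d * σ - 1) →
      ((2 ^ ((l + 2) * m) * (2 ^ ((l - 2) * m) - 1) / (2 ^ m + 1) : ℚ)
          ≤ (binaryWeilSum (2 * l * m) d z : ℚ)) ∧
        (2 ^ (l * m + 1) : ℤ) < binaryWeilSum (2 * l * m) d z := by
  rintro _ x₀ hx₀ rfl
  have hlm : 3 < l * m := by
    obtain ⟨r, hr⟩ := hle
    exact (by omega : 3 < l).trans_le (Nat.le_mul_of_pos_right l hm)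
  have hF : Fintype.card (GaloisField 2 (2 * l * m)) = 2 ^ (2 * l * m) := by
    rw [← Nat.card_eq_fintype_card, GaloisField.card 2 _ (by positivity)]
  have bounds := weil_sum_lower_bound_l_gt_two_general m l s d σ hF hl.le hd hσ hx₀
  exact ⟨bounds.1, bounds.2 hl hlm⟩
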